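/- There exists a 2-(24,4,1) packing with 42 blocks whose leave is a vertex-disjoint union of one cycle of length 4 and four cycles of length 5, covering all 24 points (leave type 4^1 5^4). -/

import Mathlib

/-!
Let `τ` be the permutation of the points whose cycles are to become the cycles of the leave. It
suffices to find 4-element blocks such that every point lies in exactly 7 of them and two distinct
points lie together in no block if `τ` sends one to the other, and in exactly one block otherwise:
the packing property and the leave can be read off, and counting incidences gives
`24 * 7 / 4 = 42` blocks. The blocks are the images of 12 base blocks under the powers of a
permutation of order 4 that commutes with `τ`, rotates the 4-cycle and permutes the 5-cycles. By
this symmetry, the number of blocks through two points needs to be evaluated only when the first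
point is one of six orbit representatives.
-/

/-- A 2-(24,4,1) packing: a collection of 4-element blocks on 24 points such that
every pair of distinct points lies in at most one block. -/
def IsPacking (B : Finset (Finset (Fin 24))) : Prop :=
  (∀ b ∈ B, b.card = 4) ∧
  ∀ p q : Fin 24, p ≠ q → ∀ b₁ ∈ B, ∀ b₂ ∈ B,
    p ∈ b₁ → q ∈ b₁ → p ∈ b₂ → q ∈ b₂ → b₁ = b₂

/-- Adjacency in the leave of a packing: the pair of distinct points is covered by no block. -/
def LeaveAdj (B : Finset (Finset (Fin 24))) (p q : Fin 24) : Prop :=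
  p ≠ q ∧ ∀ b ∈ B, ¬ (p ∈ b ∧ q ∈ b)

/-- The leave of the packing `B` is a vertex-disjoint union of cycles whose lengths are
given by the list `L`, covering all 24 points. -/
def LeaveIsCycleType (B : Finset (Finset (Fin 24))) (L : List ℕ) : Prop :=
  ∃ f : (i : Fin L.length) → ZMod (L.get i) → Fin 24,
    Function.Bijective (fun x : Σ i : Fin L.length, ZMod (L.get i) => f x.1 x.2) ∧
    ∀ p q : Fin 24, LeaveAdj B p q ↔
      ∃ i k, (p = f i k ∧ q = f i (k + 1)) ∨ (q = f i k ∧ p = f i (k + 1))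

open Equiv Finset MulAction
open scoped Pointwise

section Design

variable {α : Type*} [DecidableEq α]

/-- The concurrence of `p` and `q` in the block design `B`: the number of blocks through both
points. For `p = q` this is the replication number of `p`. -/
def concurrence (B : Finset (Finset α)) (p q : α) : ℕ :=
  #{b ∈ B | p ∈ b ∧ q ∈ b}

theorem card_mul_eq_of_concurrence_self [Fintype α] {B : Finset (Finset α)} {k r : ℕ}
    (hk : ∀ b ∈ B, #b = k) (hr : ∀ p, concurrence B p p = r) :
    #B * k = Fintype.card α * r := by
  rw [← sum_const_nat hk]
  exact sum_card fun p => by simpa only [concurrence, and_self] using hr p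

theorem concurrence_le_one_iff {B : Finset (Finset α)} {p q : α} :
    concurrence B p q ≤ 1 ↔
      ∀ b₁ ∈ B, ∀ b₂ ∈ B, p ∈ b₁ → q ∈ b₁ → p ∈ b₂ → q ∈ b₂ → b₁ = b₂ := by
  simp only [concurrence, card_le_one, mem_filter]
  grind

theorem concurrence_eq_zero_iff {B : Finset (Finset α)} {p q : α} :
    concurrence B p q = 0 ↔ ∀ b ∈ B, ¬ (p ∈ b ∧ q ∈ b) := by
  rw [concurrence, card_eq_zero, filter_eq_empty_iff]

section Action

variable {G : Type*} [Group G] [MulAction G α]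

theorem card_of_mem_smul {T : Finset G} {B : Finset (Finset α)} {k : ℕ} (hB : ∀ b ∈ B, #b = k) :
    ∀ b ∈ T • B, #b = k := by
  intro b hb
  obtain ⟨g, -, b₀, hb₀, rfl⟩ := mem_smul.mp hb
  rw [card_smul_finset, hB b₀ hb₀]

theorem mem_stabilizer_smul [DecidableEq G] {β : Type*} [DecidableEq β] [MulAction G β]
    {T : Finset G} {g : G} (hT : g • T = T) (B : Finset β) : g ∈ stabilizer G (T • B) := by
  rw [mem_stabilizer_iff, ← smul_assoc, hT]

theorem concurrence_smul {B : Finset (Finset α)} {g : G} (hg : g ∈ stabilizer G B) (p q : α) :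
    concurrence B (g • p) (g • q) = concurrence B p q := by
  have hB : g • B = B := hg
  have hfilter : {b ∈ B | g • p ∈ b ∧ g • q ∈ b} = g • {b ∈ B | p ∈ b ∧ q ∈ b} := by
    ext b
    rw [← inv_smul_mem_iff, mem_filter, mem_filter, inv_smul_mem_iff, hB, mem_inv_smul_finset_iff,
      mem_inv_smul_finset_iff]
  rw [concurrence, hfilter, card_smul_finset, concurrence]

end Action

end Design

theorem leaveIsCycleType_of_perm {B : Finset (Finset (Fin 24))} {L : List ℕ} (τ : Perm (Fin 24))
    (hadj : ∀ p q, LeaveAdj B p q ↔ q = τ p ∨ p = τ q)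
    (f : (i : Fin L.length) → ZMod (L.get i) → Fin 24)
    (hf : Function.Bijective fun x : Σ i, ZMod (L.get i) => f x.1 x.2)
    (hτ : ∀ i k, f i (k + 1) = τ (f i k)) : LeaveIsCycleType B L := by
  refine ⟨f, hf, fun p q => ?_⟩
  obtain ⟨⟨i, k⟩, rfl⟩ := hf.surjective p
  obtain ⟨⟨j, l⟩, rfl⟩ := hf.surjective q
  rw [hadj]
  constructor
  · rintro (h | h)
    · exact ⟨i, k, .inl ⟨rfl, h.trans (hτ i k).symm⟩⟩
    · exact ⟨j, l, .inr ⟨rfl, h.trans (hτ j l).symm⟩⟩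
  · rintro ⟨m, n, ⟨hp, hq⟩ | ⟨hq, hp⟩⟩
    · exact .inl (by rw [hq, hτ, ← hp])
    · exact .inr (by rw [hp, hτ, ← hq])

/-- The permutation whose cycles, read as undirected graphs, are the cycles of the leave. -/
def leaveSucc : Perm (Fin 24) :=
  c[0, 1, 2, 3] * c[4, 5, 6, 7, 8] * c[9, 10, 11, 12, 13] * c[14, 15, 16, 17, 18] *
    c[19, 20, 21, 22, 23]

/-- The automorphism of order 4 of the packing: one step along the 4-cycle of the leave, and from
each 5-cycle of the leave to the next. -/
def shift : Perm (Fin 24) :=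
  c[0, 1, 2, 3] * c[4, 9, 14, 19] * c[5, 10, 15, 20] * c[6, 11, 16, 21] * c[7, 12, 17, 22] *
    c[8, 13, 18, 23]

/-- The cyclic group generated by `shift`, as an explicit finite set. -/
def shiftPowers : Finset (Perm (Fin 24)) :=
  {1, shift, shift ^ 2, shift ^ 3}

/-- One point from each cycle of `shift`. -/
def shiftReps : Finset (Fin 24) :=
  {0, 4, 5, 6, 7, 8}

/-- One block from each orbit of the packing under `shift`. A pair `{x, shift² x}` is preserved by
`shift²`, hence so is the only block containing it, which is then a union of two such pairs. This
accounts for the first three base blocks, with orbits of size 2; the other orbits have size 4. -/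
def baseBlocks : Finset (Finset (Fin 24)) :=
  {{0, 2, 13, 23}, {4, 6, 14, 16}, {5, 12, 15, 22},
   {0, 4, 20, 22}, {0, 5, 10, 16}, {0, 6, 9, 18},
   {0, 7, 12, 19}, {0, 8, 11, 15}, {0, 14, 17, 21},
   {4, 9, 15, 23}, {5, 8, 17, 23}, {6, 8, 12, 21}}

/-- The blocks of the packing: all images of the base blocks under powers of `shift`. -/
def blocks : Finset (Finset (Fin 24)) :=
  shiftPowers • baseBlocks

theorem card_of_mem_blocks : ∀ b ∈ blocks, #b = 4 :=
  card_of_mem_smul <| by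
    simp only [baseBlocks, mem_insert, mem_singleton, forall_eq_or_imp, forall_eq]
    decide

theorem shift_mem_stabilizer_blocks : shift ∈ stabilizer (Perm (Fin 24)) blocks :=
  mem_stabilizer_smul (by decide +kernel) baseBlocks

theorem commute_shift_leaveSucc : Commute shift leaveSucc := by
  rw [commute_iff_eq]
  decide +kernel

theorem exists_mem_zpowers_shift_apply_eq (p : Fin 24) :
    ∃ g ∈ Subgroup.zpowers shift, ∃ r ∈ shiftReps, g r = p := by
  have hpow : ∀ p, ∃ k : Fin 4, ∃ r ∈ shiftReps, (shift ^ k.val) r = p := by decide +kernel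
  obtain ⟨k, hk⟩ := hpow p
  exact ⟨shift ^ k.val, Subgroup.npow_mem_zpowers shift k, hk⟩

theorem concurrence_blocks_of_mem_shiftReps : ∀ r ∈ shiftReps, ∀ q,
    concurrence blocks r q =
      if r = q then 7 else if q = leaveSucc r ∨ r = leaveSucc q then 0 else 1 := by
  decide +kernel

theorem concurrence_blocks (p q : Fin 24) :
    concurrence blocks p q =
      if p = q then 7 else if q = leaveSucc p ∨ p = leaveSucc q then 0 else 1 := by
  obtain ⟨g, hg, r, hr, rfl⟩ := exists_mem_zpowers_shift_apply_eq p
  obtain ⟨s, rfl⟩ := g.surjective q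
  have hconcurrence : concurrence blocks (g r) (g s) = concurrence blocks r s :=
    concurrence_smul (Subgroup.zpowers_le.mpr shift_mem_stabilizer_blocks hg) r s
  have hcommute : Commute g leaveSucc := by
    obtain ⟨n, rfl⟩ := hg
    exact commute_shift_leaveSucc.zpow_left n
  have hsucc (x : Fin 24) : leaveSucc (g x) = g (leaveSucc x) := by
    rw [← Perm.mul_apply, ← Perm.mul_apply, hcommute.eq]
  simp only [hconcurrence, hsucc, g.injective.eq_iff,
    concurrence_blocks_of_mem_shiftReps r hr s]

theorem isPacking_blocks : IsPacking blocks := by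
  refine ⟨card_of_mem_blocks, fun p q hpq => concurrence_le_one_iff.mp ?_⟩
  rw [concurrence_blocks, if_neg hpq]
  split_ifs <;> lia

theorem card_blocks : #blocks = 42 := by
  have hincidences : #blocks * 4 = Fintype.card (Fin 24) * 7 :=
    card_mul_eq_of_concurrence_self card_of_mem_blocks fun p => by
      rw [concurrence_blocks, if_pos rfl]
  rw [Fintype.card_fin] at hincidences
  lia

theorem leaveAdj_blocks_iff (p q : Fin 24) :
    LeaveAdj blocks p q ↔ q = leaveSucc p ∨ p = leaveSucc q := by
  have hmoved : ∀ x, x ≠ leaveSucc x := by decide +kernel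
  rw [LeaveAdj, ← concurrence_eq_zero_iff, concurrence_blocks]
  rcases eq_or_ne p q with rfl | hpq
  · simp only [ne_eq, not_true_eq_false, false_and, hmoved p, or_self]
  · simp only [ne_eq, hpq, not_false_eq_true, true_and, if_false, ite_eq_left_iff, one_ne_zero,
      imp_false, not_not]

instance neZero_cycleLength (i : Fin [4, 5, 5, 5, 5].length) : NeZero ([4, 5, 5, 5, 5].get i) :=
  ⟨by revert i; decide⟩

/-- The parametrization of the cycles of the leave by following `leaveSucc` from a base point. -/
def leaveCycle (i : Fin [4, 5, 5, 5, 5].length) (k : ZMod ([4, 5, 5, 5, 5].get i)) : Fin 24 :=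
  (leaveSucc ^ k.val) (![0, 4, 9, 14, 19] i)

theorem bijective_leaveCycle :
    Function.Bijective fun x : Σ i, ZMod ([4, 5, 5, 5, 5].get i) => leaveCycle x.1 x.2 := by
  decide +kernel

theorem leaveCycle_add_one : ∀ i k, leaveCycle i (k + 1) = leaveSucc (leaveCycle i k) := by
  decide +kernel

/-- There is a 2-(24,4,1) packing with 42 blocks whose leave is a vertex-disjoint
union of cycles of lengths [4, 5, 5, 5, 5], covering all 24 points. -/
theorem exists_max_packing_with_leave_type :
    ∃ B : Finset (Finset (Fin 24)), IsPacking B ∧ B.card = 42 ∧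
      LeaveIsCycleType B [4, 5, 5, 5, 5] :=
  ⟨blocks, isPacking_blocks, card_blocks,
    leaveIsCycleType_of_perm leaveSucc leaveAdj_blocks_iff leaveCycle bijective_leaveCycle
      leaveCycle_add_one⟩
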